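/- Let $T>0$, $c<0$, $b>0$, and $-1<\mu<1$ with weight $w(x)=(1-x^2)^\mu$. Suppose $(\eta_1,u_1)$ and $(\eta_2,u_2)$ are two solutions in $C([0,T];H^2_w)\times C([0,T];H^1_w)$ of the integral system $\eta(t)=H(t)+\int_0^t A_D(u+\eta u)\,d\tau$, $u(t)=U(t)+\int_0^t A_D(c\eta_{xx}+\eta+u^2/2)\,d\tau$ with the same data $H,U$. Then $(\eta_1,u_1)=(\eta_2,u_2)$ on $[0,T]$. -/

import Mathlib

open MeasureTheory Set

/-- The Jacobi weight `w(x) = (1-x^2)^μ`. -/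
noncomputable def jw (μ : ℝ) (x : ℝ) : ℝ := (1 - x^2) ^ μ

/-- Membership in the weighted Sobolev space `H^1_w(-1,1)`. -/
def MemH1w (μ : ℝ) (f : ℝ → ℝ) : Prop :=
  DifferentiableOn ℝ f (Ioo (-1) 1) ∧
  IntegrableOn (fun x => ((f x)^2 + (deriv f x)^2) * jw μ x) (Ioo (-1) 1)

/-- The `H^1_w` norm. -/
noncomputable def H1wNorm (μ : ℝ) (f : ℝ → ℝ) : ℝ :=
  Real.sqrt (∫ x in Ioo (-1:ℝ) 1, ((f x)^2 + (deriv f x)^2) * jw μ x)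

/-- Membership in the weighted space `L^2_w(-1,1)`. -/
def MemL2w (μ : ℝ) (f : ℝ → ℝ) : Prop :=
  IntegrableOn (fun x => (f x)^2 * jw μ x) (Ioo (-1) 1)

/-- The `L^2_w` norm. -/
noncomputable def L2wNorm (μ : ℝ) (f : ℝ → ℝ) : ℝ :=
  Real.sqrt (∫ x in Ioo (-1:ℝ) 1, (f x)^2 * jw μ x)

/-- Membership in the weighted Sobolev space `H^2_w(-1,1)`. -/
def MemH2w (μ : ℝ) (f : ℝ → ℝ) : Prop :=
  DifferentiableOn ℝ f (Ioo (-1) 1) ∧ DifferentiableOn ℝ (deriv f) (Ioo (-1) 1) ∧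
  IntegrableOn
    (fun x => ((f x)^2 + (deriv f x)^2 + (deriv (deriv f) x)^2) * jw μ x) (Ioo (-1) 1)

/-- The `H^2_w` norm. -/
noncomputable def H2wNorm (μ : ℝ) (f : ℝ → ℝ) : ℝ :=
  Real.sqrt (∫ x in Ioo (-1:ℝ) 1,
    ((f x)^2 + (deriv f x)^2 + (deriv (deriv f) x)^2) * jw μ x)

/-- `H^1_{w,0}`: functions of `H^1_w` vanishing at `±1`. -/
def MemH1w0 (μ : ℝ) (f : ℝ → ℝ) : Prop :=
  MemH1w μ f ∧ f (-1) = 0 ∧ f 1 = 0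

/-- The bilinear form `A_b(φ,ψ) = (φ,ψ)_w + b ∫ φ' (ψ w)'`. -/
noncomputable def bilinA (μ b : ℝ) (φ ψ : ℝ → ℝ) : ℝ :=
  (∫ x in Ioo (-1:ℝ) 1, φ x * ψ x * jw μ x) +
  b * ∫ x in Ioo (-1:ℝ) 1, deriv φ x * deriv (fun y => ψ y * jw μ y) x

/-- `w₁(x) = sinh((1+x)/√b)`. -/
noncomputable def wone (b x : ℝ) : ℝ := Real.sinh ((1 + x) / Real.sqrt b)

/-- `w₂(x) = sinh((1-x)/√b)`. -/
noncomputable def wtwo (b x : ℝ) : ℝ := Real.sinh ((1 - x) / Real.sqrt b)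

/-- The (constant) Wronskian `W = w₁ w₂' - w₁' w₂`, evaluated at `0`. -/
noncomputable def Wron (b : ℝ) : ℝ :=
  wone b 0 * deriv (wtwo b) 0 - deriv (wone b) 0 * wtwo b 0

/-- The `ξ`-derivative `G_ξ(x,ξ)` of the Green's function
`G(x,ξ) = -(1/(bW)) w₁(min(x,ξ)) w₂(max(x,ξ))`, taken piecewise away from `ξ = x`. -/
noncomputable def Gxi (b x ξ : ℝ) : ℝ :=
  if ξ ≤ x then -(1 / (b * Wron b)) * deriv (wone b) ξ * wtwo b x
  else -(1 / (b * Wron b)) * wone b x * deriv (wtwo b) ξ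

/-- The solution operator `A_D f (x) = ∫ G_ξ(x,ξ) f(ξ) dξ` of
`v - b v'' = -f'`, `v(±1) = 0`. -/
noncomputable def AD (b : ℝ) (f : ℝ → ℝ) (x : ℝ) : ℝ :=
  ∫ ξ in Set.Ioo (-1:ℝ) 1, Gxi b x ξ * f ξ

/-- `(η,u)` solves the integral system
`η(t) = H(t) + ∫₀ᵗ A_D(u + ηu) dτ`, `u(t) = U(t) + ∫₀ᵗ A_D(c η_xx + η + u²/2) dτ`
on `[0,T]`, as a member of `C([0,T];H²_w) × C([0,T];H¹_w)`. -/
def IsSolBS (T b c μ : ℝ) (H U η u : ℝ → ℝ → ℝ) : Prop :=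
  Continuous (fun p : ℝ × ℝ => η p.1 p.2) ∧
  Continuous (fun p : ℝ × ℝ => u p.1 p.2) ∧
  (∀ t ∈ Icc (0:ℝ) T, MemH2w μ (η t) ∧ MemH1w μ (u t)) ∧
  (∀ t ∈ Icc (0:ℝ) T, ∀ x : ℝ,
    η t x = H t x + (∫ τ in (0:ℝ)..t, AD b (fun y => u τ y + η τ y * u τ y) x) ∧
    u t x = U t x + (∫ τ in (0:ℝ)..t,
      AD b (fun y => c * deriv (deriv (η τ)) y + η τ y + (u τ y)^2 / 2) x))

/-!
Each equation of the system expresses a difference of two solutions through `A_D`, whose kernel is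
bounded and piecewise smooth, so that `A_D` is bounded for the supremum norm. For `η₁ - η₂` it acts
on the time integral of the difference of the fluxes `u + η u`, which is a locally Lipschitz
function of the solution. In the equation for `u` the term `A_D (η₁ - η₂)_xx` is integrated by
parts: only `(η₁ - η₂)_x` remains, and differentiating the formula for `η₁ - η₂` bounds it by that
same time integral of the fluxes. The integration by parts is legitimate because `1 / w` is
integrable for `μ < 1`, so that `η_xx` is integrable by Young's inequality. Altogether a bound `m t`
for the difference of the two solutions improves to `C ∫₀ᵗ m`, and Grönwall's lemma applies.
-/

/-- `L` is bounded for the supremum norm on `s`. Neither linearity nor regularity is asked for, so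
that the notion is stable under sums and compositions of raw formulas. -/
def IsSupBounded (s : Set ℝ) (L : (ℝ → ℝ) → ℝ → ℝ) : Prop :=
  ∃ C, 0 ≤ C ∧ ∀ (f : ℝ → ℝ) (B : ℝ), (∀ x ∈ s, ‖f x‖ ≤ B) → ∀ x ∈ s, ‖L f x‖ ≤ C * B

namespace IsSupBounded

variable {s : Set ℝ} {L L₁ L₂ : (ℝ → ℝ) → ℝ → ℝ} {a b : ℝ}

lemma add (h₁ : IsSupBounded s L₁) (h₂ : IsSupBounded s L₂) :
    IsSupBounded s fun f x => L₁ f x + L₂ f x := by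
  obtain ⟨C₁, hC₁, bound₁⟩ := h₁
  obtain ⟨C₂, hC₂, bound₂⟩ := h₂
  refine ⟨C₁ + C₂, add_nonneg hC₁ hC₂, fun f B hf x hx => ?_⟩
  rw [add_mul]
  exact norm_add_le_of_le (bound₁ f B hf x hx) (bound₂ f B hf x hx)

lemma neg (h : IsSupBounded s L) : IsSupBounded s fun f x => -L f x := by
  simpa only [IsSupBounded, norm_neg] using h

lemma sub (h₁ : IsSupBounded s L₁) (h₂ : IsSupBounded s L₂) :
    IsSupBounded s fun f x => L₁ f x - L₂ f x := by
  simpa only [sub_eq_add_neg] using h₁.add h₂.neg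

lemma comp (h₁ : IsSupBounded s L₁) (h₂ : IsSupBounded s L₂) :
    IsSupBounded s fun f => L₁ (L₂ f) := by
  obtain ⟨C₁, hC₁, bound₁⟩ := h₁
  obtain ⟨C₂, hC₂, bound₂⟩ := h₂
  refine ⟨C₁ * C₂, mul_nonneg hC₁ hC₂, fun f B hf => ?_⟩
  rw [mul_assoc]
  exact bound₁ _ _ (bound₂ f B hf)

lemma of_eval {c : ℝ} (hc : c ∈ s) : IsSupBounded s fun f _ => f c :=
  ⟨1, zero_le_one, fun f B hf _ _ => by simpa only [one_mul] using hf c hc⟩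

lemma of_mul (hs : IsCompact s) {γ : ℝ → ℝ} (hγ : Continuous γ) :
    IsSupBounded s fun f x => γ x * f x := by
  obtain ⟨C, hC⟩ := hs.exists_bound_of_continuousOn hγ.continuousOn
  refine ⟨max C 0, le_max_right _ _, fun f B hf x hx => ?_⟩
  exact norm_mul_le_of_le ((hC x hx).trans (le_max_left _ _)) (hf x hx)

lemma of_integral (hab : a ≤ b) {u v : ℝ → ℝ} (hu : MapsTo u (Icc a b) (Icc a b))
    (hv : MapsTo v (Icc a b) (Icc a b)) :
    IsSupBounded (Icc a b) fun f x => ∫ ξ in (u x)..(v x), f ξ := by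
  refine ⟨b - a, sub_nonneg.2 hab, fun f B hf x hx => ?_⟩
  have hB : 0 ≤ B := (norm_nonneg _).trans (hf x hx)
  have hlen : |v x - u x| ≤ b - a :=
    abs_sub_le_of_le_of_le (hv hx).1 (hv hx).2 (hu hx).1 (hu hx).2
  calc ‖∫ ξ in (u x)..(v x), f ξ‖ ≤ B * |v x - u x| :=
        intervalIntegral.norm_integral_le_of_norm_le_const fun ξ hξ =>
          hf ξ (uIcc_subset_Icc (hu hx) (hv hx) (uIoc_subset_uIcc hξ))
    _ ≤ (b - a) * B := by rw [mul_comm]; gcongr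

end IsSupBounded

/-- A semiseparable kernel on `ℝ × ℝ`: it is `p x * q ξ` for `ξ ≤ x` and `r x * s ξ` for `x < ξ`.
The Green's function of a second-order boundary value problem and its derivatives have this form. -/
structure SemisepKernel where
  p : ℝ → ℝ
  q : ℝ → ℝ
  r : ℝ → ℝ
  s : ℝ → ℝ

namespace SemisepKernel

/-- The four factors of the kernel are of class `C^n`. -/
structure IsContDiff (K : SemisepKernel) (n : WithTop ℕ∞) : Prop where
  p : ContDiff ℝ n K.p
  q : ContDiff ℝ n K.q
  r : ContDiff ℝ n K.r
  s : ContDiff ℝ n K.s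

/-- The partial derivative of the kernel in its first variable, off the diagonal. -/
noncomputable def derivFst (K : SemisepKernel) : SemisepKernel := ⟨deriv K.p, K.q, deriv K.r, K.s⟩

/-- The partial derivative of the kernel in its second variable, off the diagonal. -/
noncomputable def derivSnd (K : SemisepKernel) : SemisepKernel := ⟨K.p, deriv K.q, K.r, deriv K.s⟩

/-- The jump of the kernel across the diagonal. -/
def jump (K : SemisepKernel) (x : ℝ) : ℝ := K.p x * K.q x - K.r x * K.s x

/-- The integral operator on `[a, b]` with kernel `K`, split at the diagonal. -/
noncomputable def op (K : SemisepKernel) (a b : ℝ) (f : ℝ → ℝ) (x : ℝ) : ℝ :=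
  K.p x * (∫ ξ in a..x, K.q ξ * f ξ) + K.r x * ∫ ξ in x..b, K.s ξ * f ξ

/-- The operator `f ↦ (K f)'`, in a form that makes sense without differentiating. -/
noncomputable def derivOp (K : SemisepKernel) (a b : ℝ) (f : ℝ → ℝ) (x : ℝ) : ℝ :=
  K.jump x * f x + K.derivFst.op a b f x

/-- The operator `f ↦ K f'`, in the form free of `f'` that integration by parts gives. -/
noncomputable def byPartsOp (K : SemisepKernel) (a b : ℝ) (f : ℝ → ℝ) (x : ℝ) : ℝ :=
  K.jump x * f x - K.p x * K.q a * f a + K.r x * K.s b * f b - K.derivSnd.op a b f x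

variable {K : SemisepKernel} {a b : ℝ}

namespace IsContDiff

variable {m n : WithTop ℕ∞}

lemma of_le (hK : K.IsContDiff n) (hmn : m ≤ n) : K.IsContDiff m :=
  ⟨hK.p.of_le hmn, hK.q.of_le hmn, hK.r.of_le hmn, hK.s.of_le hmn⟩

lemma derivFst (hK : K.IsContDiff n) (hmn : m + 1 ≤ n) : K.derivFst.IsContDiff m where
  p := (contDiff_succ_iff_deriv.1 (hK.p.of_le hmn)).2.2
  q := hK.q.of_le (le_self_add.trans hmn)
  r := (contDiff_succ_iff_deriv.1 (hK.r.of_le hmn)).2.2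
  s := hK.s.of_le (le_self_add.trans hmn)

lemma derivSnd (hK : K.IsContDiff n) (hmn : m + 1 ≤ n) : K.derivSnd.IsContDiff m where
  p := hK.p.of_le (le_self_add.trans hmn)
  q := (contDiff_succ_iff_deriv.1 (hK.q.of_le hmn)).2.2
  r := hK.r.of_le (le_self_add.trans hmn)
  s := (contDiff_succ_iff_deriv.1 (hK.s.of_le hmn)).2.2

lemma continuous_jump (hK : K.IsContDiff 0) : Continuous K.jump :=
  (hK.p.continuous.mul hK.q.continuous).sub (hK.r.continuous.mul hK.s.continuous)

end IsContDiff

section Linearity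

variable {f g : ℝ → ℝ} {x : ℝ}

lemma op_const_mul (K : SemisepKernel) (a b c : ℝ) (f : ℝ → ℝ) (x : ℝ) :
    K.op a b (fun ξ => c * f ξ) x = c * K.op a b f x := by
  simp only [op, mul_left_comm _ c, intervalIntegral.integral_const_mul]
  ring

lemma op_add (hK : K.IsContDiff 0) (hx : x ∈ uIcc a b) (hf : IntervalIntegrable f volume a b)
    (hg : IntervalIntegrable g volume a b) :
    K.op a b (fun ξ => f ξ + g ξ) x = K.op a b f x + K.op a b g x := by
  have hl := uIcc_subset_uIcc_left hx
  have hr := uIcc_subset_uIcc_right hx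
  have hq := hK.q.continuous.continuousOn (s := uIcc a x)
  have hs := hK.s.continuous.continuousOn (s := uIcc x b)
  simp only [op, mul_add]
  rw [intervalIntegral.integral_add ((hf.mono_set hl).continuousOn_mul hq)
      ((hg.mono_set hl).continuousOn_mul hq),
    intervalIntegral.integral_add ((hf.mono_set hr).continuousOn_mul hs)
      ((hg.mono_set hr).continuousOn_mul hs)]
  ring

lemma op_sub (hK : K.IsContDiff 0) (hx : x ∈ uIcc a b) (hf : IntervalIntegrable f volume a b)
    (hg : IntervalIntegrable g volume a b) :
    K.op a b (fun ξ => f ξ - g ξ) x = K.op a b f x - K.op a b g x := by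
  have h := op_add hK hx hf (hg.const_mul (-1))
  rw [op_const_mul] at h
  simpa only [neg_one_mul, ← sub_eq_add_neg] using h

end Linearity

lemma integral_ite_mul_eq_op (hK : K.IsContDiff 0) {x : ℝ} (hx : x ∈ Icc a b) {f : ℝ → ℝ}
    (hf : IntervalIntegrable f volume a b) :
    ∫ ξ in a..b, (if ξ ≤ x then K.p x * K.q ξ else K.r x * K.s ξ) * f ξ = K.op a b f x := by
  have hx' : x ∈ uIcc a b := Icc_subset_uIcc hx
  have left : EqOn (fun ξ => K.p x * (K.q ξ * f ξ))
      (fun ξ => (if ξ ≤ x then K.p x * K.q ξ else K.r x * K.s ξ) * f ξ) (uIoc a x) := by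
    intro ξ hξ
    simp only [if_pos (uIoc_of_le hx.1 ▸ hξ).2, mul_assoc]
  have right : EqOn (fun ξ => K.r x * (K.s ξ * f ξ))
      (fun ξ => (if ξ ≤ x then K.p x * K.q ξ else K.r x * K.s ξ) * f ξ) (uIoc x b) := by
    intro ξ hξ
    simp only [if_neg (uIoc_of_le hx.2 ▸ hξ).1.not_ge, mul_assoc]
  have int_left := ((hf.mono_set (uIcc_subset_uIcc_left hx')).continuousOn_mul
    hK.q.continuous.continuousOn).const_mul (K.p x)
  have int_right := ((hf.mono_set (uIcc_subset_uIcc_right hx')).continuousOn_mul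
    hK.s.continuous.continuousOn).const_mul (K.r x)
  rw [← intervalIntegral.integral_add_adjacent_intervals (int_left.congr left)
      (int_right.congr right),
    ← intervalIntegral.integral_congr_ae (.of_forall left),
    ← intervalIntegral.integral_congr_ae (.of_forall right),
    intervalIntegral.integral_const_mul, intervalIntegral.integral_const_mul, op]

lemma hasDerivAt_op (hK : K.IsContDiff 1) (a b : ℝ) {f : ℝ → ℝ} (hf : Continuous f) (x : ℝ) :
    HasDerivAt (K.op a b f) (K.derivOp a b f x) x := by
  have hqf : Continuous fun ξ => K.q ξ * f ξ := hK.q.continuous.mul hf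
  have hsf : Continuous fun ξ => K.s ξ * f ξ := hK.s.continuous.mul hf
  have hp := (hK.p.differentiable one_ne_zero x).hasDerivAt
  have hr := (hK.r.differentiable one_ne_zero x).hasDerivAt
  have left := (hqf.integral_hasStrictDerivAt a x).hasDerivAt
  have right := intervalIntegral.integral_hasDerivAt_left (hsf.intervalIntegrable x b)
    (hsf.stronglyMeasurableAtFilter _ _) hsf.continuousAt
  refine ((hp.fun_mul left).fun_add (hr.fun_mul right)).congr_deriv ?_
  simp only [derivOp, op, jump, derivFst]
  ring

lemma op_eq_byPartsOp (hK : K.IsContDiff 1) {x : ℝ} (hx : x ∈ Icc a b) {f f' : ℝ → ℝ}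
    (hf : ContinuousOn f (Icc a b)) (hf' : ∀ ξ ∈ Ioo a b, HasDerivAt f (f' ξ) ξ)
    (hint : IntervalIntegrable f' volume a b) :
    K.op a b f' x = K.byPartsOp a b f x := by
  have parts {g : ℝ → ℝ} (hg : ContDiff ℝ 1 g) {c d : ℝ} (hcd : c ≤ d) (hac : a ≤ c) (hdb : d ≤ b) :
      ∫ ξ in c..d, g ξ * f' ξ = g d * f d - g c * f c - ∫ ξ in c..d, deriv g ξ * f ξ := by
    have hsub : uIcc c d ⊆ Icc a b := uIcc_of_le hcd ▸ Icc_subset_Icc hac hdb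
    refine intervalIntegral.integral_mul_deriv_eq_deriv_mul_of_hasDerivAt
      hg.continuous.continuousOn (hf.mono hsub)
      (fun ξ _ => (hg.differentiable one_ne_zero ξ).hasDerivAt) (fun ξ hξ => hf' ξ ?_)
      ((hg.continuous_deriv le_rfl).intervalIntegrable _ _)
      (hint.mono_set (hsub.trans Icc_subset_uIcc))
    rw [min_eq_left hcd, max_eq_right hcd] at hξ
    exact Ioo_subset_Ioo hac hdb hξ
  rw [op, parts hK.q hx.1 le_rfl hx.2, parts hK.s hx.2 hx.1 le_rfl]
  simp only [byPartsOp, op, jump, derivSnd]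
  ring

section Continuity

variable {Y : Type*} [TopologicalSpace Y] {h : Y → ℝ → ℝ}

lemma continuous_op (hK : K.IsContDiff 0) (a b : ℝ) (hh : Continuous fun z : Y × ℝ => h z.1 z.2) :
    Continuous fun z : Y × ℝ => K.op a b (h z.1) z.2 := by
  have primitive {g : ℝ → ℝ} (hg : Continuous g) (c : ℝ) :
      Continuous fun z : Y × ℝ => ∫ ξ in c..z.2, g ξ * h z.1 ξ :=
    intervalIntegral.continuous_parametric_intervalIntegral_of_continuous
      (f := fun (z : Y × ℝ) ξ => g ξ * h z.1 ξ)
      ((hg.comp continuous_snd).mul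
        (hh.comp (by fun_prop : Continuous fun w : (Y × ℝ) × ℝ => (w.1.1, w.2)))) continuous_snd
  have right : Continuous fun z : Y × ℝ => ∫ ξ in z.2..b, K.s ξ * h z.1 ξ := by
    simpa only [intervalIntegral.integral_symm b] using (primitive hK.s.continuous b).fun_neg
  exact ((hK.p.continuous.comp continuous_snd).mul (primitive hK.q.continuous a)).add
    ((hK.r.continuous.comp continuous_snd).mul right)

lemma continuous_derivOp (hK : K.IsContDiff 1) (a b : ℝ)
    (hh : Continuous fun z : Y × ℝ => h z.1 z.2) :
    Continuous fun z : Y × ℝ => K.derivOp a b (h z.1) z.2 :=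
  (((hK.of_le zero_le_one).continuous_jump.comp continuous_snd).mul hh).add
    (continuous_op (hK.derivFst (zero_add 1).le) a b hh)

lemma continuous_byPartsOp (hK : K.IsContDiff 1) (a b : ℝ)
    (hh : Continuous fun z : Y × ℝ => h z.1 z.2) :
    Continuous fun z : Y × ℝ => K.byPartsOp a b (h z.1) z.2 := by
  have h_at (c : ℝ) : Continuous fun z : Y × ℝ => h z.1 c :=
    hh.comp (by fun_prop : Continuous fun z : Y × ℝ => (z.1, c))
  have hp := hK.p.continuous.comp (continuous_snd (X := Y))
  have hr := hK.r.continuous.comp (continuous_snd (X := Y))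
  exact (((((hK.of_le zero_le_one).continuous_jump.comp continuous_snd).mul hh).sub
    ((hp.mul continuous_const).mul (h_at a))).add ((hr.mul continuous_const).mul (h_at b))).sub
    (continuous_op (hK.derivSnd (zero_add 1).le) a b hh)

end Continuity

lemma integral_op (hK : K.IsContDiff 0) (a b c d : ℝ) {h : ℝ → ℝ → ℝ}
    (hh : Continuous fun z : ℝ × ℝ => h z.1 z.2) (x : ℝ) :
    ∫ τ in c..d, K.op a b (h τ) x = K.op a b (fun ξ => ∫ τ in c..d, h τ ξ) x := by
  have swap {g : ℝ → ℝ} (hg : Continuous g) (y z : ℝ) :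
      ∫ τ in c..d, ∫ ξ in y..z, g ξ * h τ ξ = ∫ ξ in y..z, g ξ * ∫ τ in c..d, h τ ξ := by
    have hgh : Continuous fun w : ℝ × ℝ => g w.2 * h w.1 w.2 := by fun_prop
    rw [intervalIntegral_intervalIntegral_swap]
    · simp only [intervalIntegral.integral_const_mul]
    · exact (hgh.continuousOn.integrableOn_compact (isCompact_uIcc.prod isCompact_uIcc)).mono_set
        (prod_mono uIoc_subset_uIcc uIoc_subset_uIcc)
  have int {g : ℝ → ℝ} (hg : Continuous g) (y z : ℝ) :
      IntervalIntegrable (fun τ => ∫ ξ in y..z, g ξ * h τ ξ) volume c d :=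
    (intervalIntegral.continuous_parametric_intervalIntegral_of_continuous'
      (f := fun τ ξ => g ξ * h τ ξ) (by fun_prop) y z).intervalIntegrable c d
  simp only [op]
  rw [intervalIntegral.integral_add ((int hK.q.continuous a x).const_mul _)
      ((int hK.s.continuous x b).const_mul _), intervalIntegral.integral_const_mul,
    intervalIntegral.integral_const_mul, swap hK.q.continuous, swap hK.s.continuous]

lemma isSupBounded_op (hK : K.IsContDiff 0) (hab : a ≤ b) :
    IsSupBounded (Icc a b) (K.op a b) := by
  have mul {γ : ℝ → ℝ} (hγ : ContDiff ℝ 0 γ) :=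
    IsSupBounded.of_mul (isCompact_Icc (a := a) (b := b)) hγ.continuous
  have left := IsSupBounded.of_integral hab (u := fun _ => a) (v := id)
    (fun _ _ => left_mem_Icc.2 hab) (mapsTo_id _)
  have right := IsSupBounded.of_integral hab (u := id) (v := fun _ => b)
    (mapsTo_id _) (fun _ _ => right_mem_Icc.2 hab)
  exact ((mul hK.p).comp (left.comp (mul hK.q))).add ((mul hK.r).comp (right.comp (mul hK.s)))

lemma isSupBounded_derivOp (hK : K.IsContDiff 1) (hab : a ≤ b) :
    IsSupBounded (Icc a b) (K.derivOp a b) :=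
  (IsSupBounded.of_mul isCompact_Icc (hK.of_le zero_le_one).continuous_jump).add
    (isSupBounded_op (hK.derivFst (zero_add 1).le) hab)

lemma isSupBounded_byPartsOp (hK : K.IsContDiff 1) (hab : a ≤ b) :
    IsSupBounded (Icc a b) (K.byPartsOp a b) := by
  have mul {γ : ℝ → ℝ} (hγ : Continuous γ) :=
    IsSupBounded.of_mul (isCompact_Icc (a := a) (b := b)) hγ
  have at_a := IsSupBounded.of_eval (left_mem_Icc.2 hab)
  have at_b := IsSupBounded.of_eval (right_mem_Icc.2 hab)
  exact (((mul (hK.of_le zero_le_one).continuous_jump).sub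
    ((mul (hK.p.continuous.mul continuous_const)).comp at_a)).add
    ((mul (hK.r.continuous.mul continuous_const)).comp at_b)).sub
    (isSupBounded_op (hK.derivSnd (zero_add 1).le) hab)

end SemisepKernel

/-- The function `m` bounds `‖h t x‖` for all `t ∈ [0, T]` and `x ∈ s`. -/
def IsMajorant {X E : Type*} [Norm E] (T : ℝ) (s : Set X) (h : ℝ → X → E) (m : ℝ → ℝ) : Prop :=
  ∀ t ∈ Icc 0 T, ∀ x ∈ s, ‖h t x‖ ≤ m t

lemma IsMajorant.integral {X E : Type*} [NormedAddCommGroup E] [NormedSpace ℝ E] {T : ℝ}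
    {s : Set X} {h : ℝ → X → E} {m : ℝ → ℝ} (hm : Continuous m) (hh : IsMajorant T s h m) :
    IsMajorant T s (fun t x => ∫ τ in (0 : ℝ)..t, h τ x) (fun t => ∫ τ in (0 : ℝ)..t, m τ) :=
  fun t ht x hx => intervalIntegral.norm_integral_le_of_norm_le ht.1
    (.of_forall fun τ hτ => hh τ ⟨hτ.1.le, hτ.2.trans ht.2⟩ x hx) (hm.intervalIntegrable 0 t)

lemma IsMajorant.integral_nonneg {X E : Type*} [NormedAddCommGroup E] {T : ℝ} {s : Set X}
    {h : ℝ → X → E} {m : ℝ → ℝ} (hh : IsMajorant T s h m) {x : X} (hx : x ∈ s) {r t : ℝ}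
    (hr : 0 ≤ r) (hrt : r ≤ t) (ht : t ≤ T) : 0 ≤ ∫ τ in r..t, m τ :=
  intervalIntegral.integral_nonneg hrt fun τ hτ =>
    (norm_nonneg _).trans (hh τ ⟨hr.trans hτ.1, hτ.2.trans ht⟩ x hx)

/-- `v` is controlled by the history of `w`: up to a constant, it is majorized by the primitive of
every continuous majorant of `w`. Quantifying over majorants avoids the supremum of `‖w t ·‖` over
`s`, whose measurability in time would have to be discussed. -/
def IsVolterraBounded {X E F : Type*} [Norm E] [Norm F] (T : ℝ) (s : Set X) (w : ℝ → X → E)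
    (v : ℝ → X → F) : Prop :=
  ∃ C, 0 ≤ C ∧ ∀ m : ℝ → ℝ, Continuous m → IsMajorant T s w m →
    IsMajorant T s v fun t => C * ∫ τ in (0 : ℝ)..t, m τ

namespace IsVolterraBounded

variable {X E F G : Type*} [NormedAddCommGroup E] {T : ℝ} {s : Set X} {w : ℝ → X → E}

lemma prodMk [NormedAddCommGroup F] [NormedAddCommGroup G] {v₁ : ℝ → X → F} {v₂ : ℝ → X → G}
    (h₁ : IsVolterraBounded T s w v₁) (h₂ : IsVolterraBounded T s w v₂) :
    IsVolterraBounded T s w fun t x => (v₁ t x, v₂ t x) := by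
  obtain ⟨C₁, hC₁, bound₁⟩ := h₁
  obtain ⟨C₂, -, bound₂⟩ := h₂
  refine ⟨max C₁ C₂, le_max_of_le_left hC₁, fun m hm hw t ht x hx => ?_⟩
  have hnonneg := hw.integral_nonneg hx le_rfl ht.1 ht.2
  exact max_le
    ((bound₁ m hm hw t ht x hx).trans (mul_le_mul_of_nonneg_right (le_max_left _ _) hnonneg))
    ((bound₂ m hm hw t ht x hx).trans (mul_le_mul_of_nonneg_right (le_max_right _ _) hnonneg))

lemma eq_zero [TopologicalSpace X] (hs : IsCompact s) (hw : Continuous fun z : ℝ × X => w z.1 z.2)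
    (h : IsVolterraBounded T s w w) {t : ℝ} (ht : t ∈ Icc 0 T) {x : X} (hx : x ∈ s) :
    w t x = 0 := by
  obtain ⟨C, hC, hstep⟩ := h
  -- Grönwall: in the norm `N` of `w` weighted by `exp (-k t)`, `hstep` contracts because `k > C`.
  set k : ℝ := C + 1
  have hk : 0 < k := by positivity
  obtain ⟨⟨t₀, x₀⟩, hz₀, hmax⟩ := (isCompact_Icc.prod hs).exists_isMaxOn
    (f := fun z : ℝ × X => ‖w z.1 z.2‖ * Real.exp (-(k * z.1))) ⟨(t, x), ht, hx⟩ (by fun_prop)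
  set N := ‖w t₀ x₀‖ * Real.exp (-(k * t₀)) with hN
  have hbound : IsMajorant T s w fun τ => N * Real.exp (k * τ) := fun τ hτ y hy => by
    rw [← div_le_iff₀ (Real.exp_pos _), div_eq_mul_inv, ← Real.exp_neg]
    exact hmax (mk_mem_prod hτ hy)
  have hN_nonneg : 0 ≤ N := by positivity
  have hintegral (τ : ℝ) : ∫ σ in (0 : ℝ)..τ, N * Real.exp (k * σ)
      = N * (Real.exp (k * τ) - 1) / k := by
    rw [intervalIntegral.integral_const_mul, intervalIntegral.integral_comp_mul_left _ hk.ne',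
      integral_exp, mul_zero, Real.exp_zero, smul_eq_mul]
    ring
  have hcontract : k * N ≤ C * N := by
    have h₀ : ‖w t₀ x₀‖ ≤ C * (N * (Real.exp (k * t₀) - 1) / k) :=
      hintegral t₀ ▸ hstep _ (by fun_prop) hbound t₀ hz₀.1 x₀ hz₀.2
    calc k * N = k * ‖w t₀ x₀‖ / Real.exp (k * t₀) := by
          rw [hN, Real.exp_neg]; ring
      _ ≤ k * (C * (N * Real.exp (k * t₀) / k)) / Real.exp (k * t₀) := by
          gcongr
          refine h₀.trans ?_
          gcongr
          linarith
      _ = C * N := by field_simp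
  have hN_zero : N = 0 := by
    have : k * N = C * N + N := by ring
    linarith
  simpa only [hN_zero, zero_mul, norm_le_zero_iff] using hbound t ht x hx

end IsVolterraBounded

lemma exists_isMajorant_comp_sub_comp {X E F : Type*} [TopologicalSpace X] [NormedAddCommGroup E]
    [NormedAddCommGroup F] {Φ : E → F} (hΦ : LocallyLipschitz Φ) (T : ℝ) {s : Set X}
    (hs : IsCompact s) {v₁ v₂ : ℝ → X → E} (hv₁ : Continuous fun z : ℝ × X => v₁ z.1 z.2)
    (hv₂ : Continuous fun z : ℝ × X => v₂ z.1 z.2) :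
    ∃ K, 0 ≤ K ∧ ∀ m : ℝ → ℝ, IsMajorant T s (fun t x => v₁ t x - v₂ t x) m →
      IsMajorant T s (fun t x => Φ (v₁ t x) - Φ (v₂ t x)) fun t => K * m t := by
  have hcompact := (isCompact_Icc (a := 0) (b := T)).prod hs
  obtain ⟨K, hK⟩ := LocallyLipschitzOn.exists_lipschitzOnWith_of_compact
    ((hcompact.image hv₁).union (hcompact.image hv₂)) hΦ.locallyLipschitzOn
  refine ⟨K, K.2, fun m hm t ht x hx => ?_⟩
  have hz : (t, x) ∈ Icc 0 T ×ˢ s := ⟨ht, hx⟩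
  exact (hK.norm_sub_le (.inl ⟨_, hz, rfl⟩) (.inr ⟨_, hz, rfl⟩)).trans
    (mul_le_mul_of_nonneg_left (hm t ht x hx) K.2)

lemma IsSupBounded.comp_isVolterraBounded {E : Type*} [Norm E] {T : ℝ} {s : Set ℝ}
    {L : (ℝ → ℝ) → ℝ → ℝ} {w : ℝ → ℝ → E} {v : ℝ → ℝ → ℝ} (hL : IsSupBounded s L)
    (hv : IsVolterraBounded T s w v) : IsVolterraBounded T s w fun t => L (v t) := by
  obtain ⟨C, hC, boundL⟩ := hL
  obtain ⟨K, hK, boundv⟩ := hv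
  refine ⟨C * K, mul_nonneg hC hK, fun m hm hw t ht => ?_⟩
  simpa only [mul_assoc] using boundL (v t) _ (boundv m hm hw t ht)

/-- If neither `f` nor `g` is integrable, both integrals are the junk value `0`. -/
lemma norm_integral_sub_integral_le {E : Type*} [NormedAddCommGroup E] [NormedSpace ℝ E]
    {f g : ℝ → E} {m : ℝ → ℝ} {a b : ℝ} (hab : a ≤ b)
    (hfg : IntervalIntegrable (fun τ => f τ - g τ) volume a b)
    (hm : IntervalIntegrable m volume a b) (hle : ∀ τ ∈ Icc a b, ‖f τ - g τ‖ ≤ m τ) :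
    ‖(∫ τ in a..b, f τ) - ∫ τ in a..b, g τ‖ ≤ ∫ τ in a..b, m τ := by
  by_cases hg : IntervalIntegrable g volume a b
  · have hf : IntervalIntegrable f volume a b := by simpa using hfg.add hg
    rw [← intervalIntegral.integral_sub hf hg]
    exact intervalIntegral.norm_integral_le_of_norm_le hab
      (.of_forall fun τ hτ => hle τ (Ioc_subset_Icc_self hτ)) hm
  · have hf : ¬ IntervalIntegrable f volume a b := fun hf => hg (by simpa using hf.sub hfg)
    rw [intervalIntegral.integral_undef hf, intervalIntegral.integral_undef hg, sub_zero, norm_zero]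
    exact intervalIntegral.integral_nonneg hab fun τ hτ => (norm_nonneg _).trans (hle τ hτ)

lemma integrable_of_integrable_sq_mul {X : Type*} [MeasurableSpace X] {ν : Measure X}
    {f w : X → ℝ} (hf : AEStronglyMeasurable f ν) (hw : ∀ᵐ x ∂ν, 0 < w x)
    (hfw : Integrable (fun x => f x ^ 2 * w x) ν) (hw_inv : Integrable (fun x => (w x)⁻¹) ν) :
    Integrable f ν := by
  refine (hfw.add hw_inv).mono' hf ?_
  filter_upwards [hw] with x hx
  have hsq : 0 ≤ (|f x| * w x - 1) ^ 2 * (w x)⁻¹ := by positivity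
  have hexpand : (|f x| * w x - 1) ^ 2 * (w x)⁻¹ = f x ^ 2 * w x + (w x)⁻¹ - 2 * |f x| := by
    rw [← sq_abs (f x)]
    field_simp
    ring
  rw [Real.norm_eq_abs, Pi.add_apply]
  linarith [abs_nonneg (f x)]

section JacobiWeight

variable {μ x : ℝ}

lemma jw_pos (μ : ℝ) (hx : x ∈ Ioo (-1 : ℝ) 1) : 0 < jw μ x :=
  Real.rpow_pos_of_pos (by nlinarith [hx.1, hx.2]) _

lemma inv_jw (μ : ℝ) (hx : x ∈ Ioo (-1 : ℝ) 1) : (jw μ x)⁻¹ = jw (-μ) x :=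
  (Real.rpow_neg (by nlinarith [hx.1, hx.2]) μ).symm

lemma jw_neg (μ x : ℝ) : jw μ (-x) = jw μ x := by
  rw [jw, jw, neg_sq]

lemma measurable_jw (μ : ℝ) : Measurable (jw μ) := by
  unfold jw
  fun_prop

lemma intervalIntegrable_jw (hμ : -1 < μ) : IntervalIntegrable (jw μ) volume (-1) 1 := by
  have hright : IntervalIntegrable (jw μ) volume 0 1 := by
    have hsing : IntervalIntegrable (fun x : ℝ => (1 - x) ^ μ) volume 0 1 := by
      simpa using ((intervalIntegral.intervalIntegrable_rpow' (a := 0) (b := 1) hμ).comp_sub_left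
        1).symm
    have hreg : ContinuousOn (fun x : ℝ => (1 + x) ^ μ) (uIcc 0 1) := by
      refine ContinuousOn.rpow_const (by fun_prop) fun x hx => .inl ?_
      rw [uIcc_of_le zero_le_one] at hx
      linarith [hx.1]
    refine (hsing.mul_continuousOn hreg).congr fun x hx => ?_
    rw [uIoc_of_le zero_le_one] at hx
    change (1 - x) ^ μ * (1 + x) ^ μ = jw μ x
    rw [jw, ← Real.mul_rpow (by linarith [hx.2]) (by linarith [hx.1])]
    ring_nf
  have hleft : IntervalIntegrable (jw μ) volume (-1) 0 := by
    have := (IntervalIntegrable.iff_comp_neg (f := jw μ)).1 hright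
    simpa only [jw_neg, neg_zero] using this.symm
  exact hleft.trans hright

lemma MemH2w.intervalIntegrable_deriv_deriv (hμ : μ < 1) {f : ℝ → ℝ} (hf : MemH2w μ f) :
    IntervalIntegrable (deriv (deriv f)) volume (-1) 1 := by
  have hmeas := measurable_deriv (deriv f)
  have hinv := intervalIntegrable_jw (neg_lt_neg hμ)
  rw [intervalIntegrable_iff_integrableOn_Ioo_of_le (by norm_num)] at hinv ⊢
  refine integrable_of_integrable_sq_mul hmeas.aestronglyMeasurable (w := jw μ) ?_
    (hf.2.2.mono' ((hmeas.pow_const 2).mul (measurable_jw μ)).aestronglyMeasurable ?_)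
    (hinv.congr_fun (fun x hx => (inv_jw μ hx).symm) measurableSet_Ioo)
  · exact ae_restrict_of_forall_mem measurableSet_Ioo fun x hx => jw_pos μ hx
  · refine ae_restrict_of_forall_mem measurableSet_Ioo fun x hx => ?_
    have hw := (jw_pos μ hx).le
    rw [Real.norm_of_nonneg (by positivity)]
    gcongr
    linarith [sq_nonneg (f x), sq_nonneg (deriv f x)]

end JacobiWeight

section GreenKernel

/-- The kernel `Gxi b` of `AD b`, as a semiseparable kernel. -/
noncomputable def greenKernel (b : ℝ) : SemisepKernel where
  p := wtwo b
  q ξ := -(1 / (b * Wron b)) * deriv (wone b) ξ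
  r := wone b
  s ξ := -(1 / (b * Wron b)) * deriv (wtwo b) ξ

lemma contDiff_wone (b : ℝ) (n : WithTop ℕ∞) : ContDiff ℝ n (wone b) :=
  Real.contDiff_sinh.comp ((contDiff_const.add contDiff_id).div_const _)

lemma contDiff_wtwo (b : ℝ) (n : WithTop ℕ∞) : ContDiff ℝ n (wtwo b) :=
  Real.contDiff_sinh.comp ((contDiff_const.sub contDiff_id).div_const _)

lemma greenKernel_isContDiff (b : ℝ) (n : WithTop ℕ∞) : (greenKernel b).IsContDiff n where
  p := contDiff_wtwo b n
  q := contDiff_const.mul (contDiff_succ_iff_deriv.1 (contDiff_wone b (n + 1))).2.2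
  r := contDiff_wone b n
  s := contDiff_const.mul (contDiff_succ_iff_deriv.1 (contDiff_wtwo b (n + 1))).2.2

lemma Gxi_eq_greenKernel (b x ξ : ℝ) :
    Gxi b x ξ = if ξ ≤ x then (greenKernel b).p x * (greenKernel b).q ξ
      else (greenKernel b).r x * (greenKernel b).s ξ := by
  rw [Gxi]
  split_ifs <;> simp only [greenKernel] <;> ring

variable {b x : ℝ}

lemma AD_eq_op (hx : x ∈ Icc (-1 : ℝ) 1) {f : ℝ → ℝ} (hf : IntervalIntegrable f volume (-1) 1) :
    AD b f x = (greenKernel b).op (-1) 1 f x := by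
  rw [AD, ← integral_Ioc_eq_integral_Ioo, ← intervalIntegral.integral_of_le (by norm_num),
    ← SemisepKernel.integral_ite_mul_eq_op (greenKernel_isContDiff b 0) hx hf]
  simp only [Gxi_eq_greenKernel]

lemma AD_const_mul_add (hx : x ∈ Icc (-1 : ℝ) 1) (c : ℝ) {f g : ℝ → ℝ}
    (hf : IntervalIntegrable f volume (-1) 1) (hg : IntervalIntegrable g volume (-1) 1) :
    AD b (fun ξ => c * f ξ + g ξ) x =
      c * (greenKernel b).op (-1) 1 f x + (greenKernel b).op (-1) 1 g x := by
  rw [AD_eq_op hx ((hf.const_mul c).add hg), ← SemisepKernel.op_const_mul,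
    SemisepKernel.op_add (greenKernel_isContDiff b 0) (Icc_subset_uIcc hx) (hf.const_mul c) hg]

lemma integral_AD_eq_op (hx : x ∈ Icc (-1 : ℝ) 1) {h : ℝ → ℝ → ℝ}
    (hh : Continuous fun z : ℝ × ℝ => h z.1 z.2) (c d : ℝ) :
    ∫ τ in c..d, AD b (h τ) x =
      (greenKernel b).op (-1) 1 (fun ξ => ∫ τ in c..d, h τ ξ) x := by
  rw [← SemisepKernel.integral_op (greenKernel_isContDiff b 0) _ _ _ _ hh]
  exact intervalIntegral.integral_congr fun τ _ =>
    AD_eq_op hx ((hh.comp (.prodMk_right τ)).intervalIntegrable _ _)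

end GreenKernel

/-- The state `(η, u)` of the system, as one function of time and space. -/
def state (η u : ℝ → ℝ → ℝ) (t x : ℝ) : ℝ × ℝ := (η t x, u t x)

/-- The nonlinearity `u + η u` of the equation for `η`, at the state `y = (η, u)`. -/
def massFlux (y : ℝ × ℝ) : ℝ := y.2 + y.1 * y.2

/-- The part `η + u² / 2`, free of derivatives, of the nonlinearity of the equation for `u`, at the
state `y = (η, u)`. -/
noncomputable def momentumFlux (y : ℝ × ℝ) : ℝ := y.1 + y.2 ^ 2 / 2

/-- The full nonlinearity `c η_xx + η + u² / 2` of the equation for `u`. -/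
noncomputable def dispersiveFlux (c : ℝ) (η u : ℝ → ℝ → ℝ) (t x : ℝ) : ℝ :=
  c * deriv (deriv (η t)) x + η t x + u t x ^ 2 / 2

lemma contDiff_massFlux {n : WithTop ℕ∞} : ContDiff ℝ n massFlux := by
  unfold massFlux
  fun_prop

lemma contDiff_momentumFlux {n : WithTop ℕ∞} : ContDiff ℝ n momentumFlux := by
  unfold momentumFlux
  fun_prop

/-- The time integral over `[0, t]` of the difference of the mass fluxes of two states. -/
noncomputable def massTransferDiff (v₁ v₂ : ℝ → ℝ → ℝ × ℝ) (t x : ℝ) : ℝ :=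
  ∫ τ in (0 : ℝ)..t, (massFlux (v₁ τ x) - massFlux (v₂ τ x))

lemma continuous_massTransferDiff {v₁ v₂ : ℝ → ℝ → ℝ × ℝ}
    (hv₁ : Continuous fun z : ℝ × ℝ => v₁ z.1 z.2) (hv₂ : Continuous fun z : ℝ × ℝ => v₂ z.1 z.2) :
    Continuous fun z : ℝ × ℝ => massTransferDiff v₁ v₂ z.1 z.2 := by
  have hflux {v : ℝ → ℝ → ℝ × ℝ} (hv : Continuous fun z : ℝ × ℝ => v z.1 z.2) :
      Continuous fun w : (ℝ × ℝ) × ℝ => massFlux (v w.2 w.1.2) :=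
    (contDiff_massFlux (n := 0)).continuous.comp
      (hv.comp (by fun_prop : Continuous fun w : (ℝ × ℝ) × ℝ => (w.2, w.1.2)))
  exact intervalIntegral.continuous_parametric_intervalIntegral_of_continuous
    (f := fun (z : ℝ × ℝ) τ => massFlux (v₁ τ z.2) - massFlux (v₂ τ z.2))
    ((hflux hv₁).sub (hflux hv₂)) continuous_fst

namespace IsSolBS

open SemisepKernel

variable {T b c μ : ℝ} {H U η u η₁ u₁ η₂ u₂ : ℝ → ℝ → ℝ} {t x : ℝ}

lemma continuous_state (h : IsSolBS T b c μ H U η u) :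
    Continuous fun z : ℝ × ℝ => state η u z.1 z.2 :=
  h.1.prodMk h.2.1

lemma memH2w (h : IsSolBS T b c μ H U η u) (ht : t ∈ Icc 0 T) : MemH2w μ (η t) :=
  (h.2.2.1 t ht).1

lemma continuous_comp_state (h : IsSolBS T b c μ H U η u) {Φ : ℝ × ℝ → ℝ} (hΦ : Continuous Φ) :
    Continuous fun z : ℝ × ℝ => Φ (state η u z.1 z.2) :=
  hΦ.comp h.continuous_state

lemma eta_sub_eq_op (h₁ : IsSolBS T b c μ H U η₁ u₁) (h₂ : IsSolBS T b c μ H U η₂ u₂)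
    (ht : t ∈ Icc 0 T) (hx : x ∈ Icc (-1 : ℝ) 1) :
    η₁ t x - η₂ t x =
      (greenKernel b).op (-1) 1 (massTransferDiff (state η₁ u₁) (state η₂ u₂) t) x := by
  have hflux {η u : ℝ → ℝ → ℝ} (h : IsSolBS T b c μ H U η u) :=
    h.continuous_comp_state (contDiff_massFlux (n := 0)).continuous
  have hint {η u : ℝ → ℝ → ℝ} (h : IsSolBS T b c μ H U η u) :
      IntervalIntegrable (fun ξ => ∫ τ in (0 : ℝ)..t, massFlux (state η u τ ξ)) volume (-1) 1 :=
    (intervalIntegral.continuous_parametric_intervalIntegral_of_continuous'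
      (f := fun ξ τ => massFlux (state η u τ ξ)) ((hflux h).comp continuous_swap) 0
      t).intervalIntegrable _ _
  calc η₁ t x - η₂ t x = (∫ τ in (0 : ℝ)..t, AD b (fun ξ => massFlux (state η₁ u₁ τ ξ)) x) -
        ∫ τ in (0 : ℝ)..t, AD b (fun ξ => massFlux (state η₂ u₂ τ ξ)) x := by
        rw [(h₁.2.2.2 t ht x).1, (h₂.2.2.2 t ht x).1, add_sub_add_left_eq_sub]
        rfl
    _ = (greenKernel b).op (-1) 1 (fun ξ => (∫ τ in (0 : ℝ)..t, massFlux (state η₁ u₁ τ ξ)) -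
        ∫ τ in (0 : ℝ)..t, massFlux (state η₂ u₂ τ ξ)) x := by
        rw [integral_AD_eq_op hx (hflux h₁), integral_AD_eq_op hx (hflux h₂),
          op_sub (greenKernel_isContDiff b 0) (Icc_subset_uIcc hx) (hint h₁) (hint h₂)]
    _ = (greenKernel b).op (-1) 1 (massTransferDiff (state η₁ u₁) (state η₂ u₂) t) x := by
        congr 1
        funext ξ
        exact (intervalIntegral.integral_sub
          (((hflux h₁).comp (.prodMk_left ξ)).intervalIntegrable _ _)
          (((hflux h₂).comp (.prodMk_left ξ)).intervalIntegrable _ _)).symm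

lemma deriv_eta_sub_eq_derivOp (h₁ : IsSolBS T b c μ H U η₁ u₁) (h₂ : IsSolBS T b c μ H U η₂ u₂)
    (ht : t ∈ Icc 0 T) (hx : x ∈ Ioo (-1 : ℝ) 1) :
    deriv (η₁ t) x - deriv (η₂ t) x =
      (greenKernel b).derivOp (-1) 1 (massTransferDiff (state η₁ u₁) (state η₂ u₂) t) x := by
  have hnhds : Ioo (-1 : ℝ) 1 ∈ nhds x := isOpen_Ioo.mem_nhds hx
  have hη₁ := ((h₁.memH2w ht).1.differentiableAt hnhds).hasDerivAt
  have hη₂ := ((h₂.memH2w ht).1.differentiableAt hnhds).hasDerivAt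
  have hop := hasDerivAt_op (greenKernel_isContDiff b 1) (-1) 1
    ((continuous_massTransferDiff h₁.continuous_state h₂.continuous_state).comp
      (.prodMk_right t)) x
  refine (hη₁.sub hη₂).unique (hop.congr_of_eventuallyEq ?_)
  filter_upwards [hnhds] with y hy
  exact h₁.eta_sub_eq_op h₂ ht (Ioo_subset_Icc_self hy)

lemma op_deriv_deriv_eta_sub (h₁ : IsSolBS T b c μ H U η₁ u₁) (h₂ : IsSolBS T b c μ H U η₂ u₂)
    (hμ : μ < 1) (ht : t ∈ Icc 0 T) (hx : x ∈ Icc (-1 : ℝ) 1) :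
    (greenKernel b).op (-1) 1 (fun ξ => deriv (deriv (η₁ t)) ξ - deriv (deriv (η₂ t)) ξ) x =
      (greenKernel b).byPartsOp (-1) 1 ((greenKernel b).derivOp (-1) 1
        (massTransferDiff (state η₁ u₁) (state η₂ u₂) t)) x := by
  have hK := greenKernel_isContDiff b 1
  have hcont := (continuous_derivOp hK (-1) 1
    (continuous_massTransferDiff h₁.continuous_state h₂.continuous_state)).comp (.prodMk_right t)
  refine op_eq_byPartsOp hK hx hcont.continuousOn (fun ξ hξ => ?_)
    (((h₁.memH2w ht).intervalIntegrable_deriv_deriv hμ).sub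
      ((h₂.memH2w ht).intervalIntegrable_deriv_deriv hμ))
  have hnhds : Ioo (-1 : ℝ) 1 ∈ nhds ξ := isOpen_Ioo.mem_nhds hξ
  have hη₁ := ((h₁.memH2w ht).2.1.differentiableAt hnhds).hasDerivAt
  have hη₂ := ((h₂.memH2w ht).2.1.differentiableAt hnhds).hasDerivAt
  refine (hη₁.sub hη₂).congr_of_eventuallyEq ?_
  filter_upwards [hnhds] with y hy
  exact (h₁.deriv_eta_sub_eq_derivOp h₂ ht hy).symm

lemma AD_dispersiveFlux_sub_eq (h₁ : IsSolBS T b c μ H U η₁ u₁) (h₂ : IsSolBS T b c μ H U η₂ u₂)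
    (hμ : μ < 1) (ht : t ∈ Icc 0 T) (hx : x ∈ Icc (-1 : ℝ) 1) :
    AD b (dispersiveFlux c η₁ u₁ t) x - AD b (dispersiveFlux c η₂ u₂ t) x =
    c * (greenKernel b).byPartsOp (-1) 1 ((greenKernel b).derivOp (-1) 1
        (massTransferDiff (state η₁ u₁) (state η₂ u₂) t)) x +
      (greenKernel b).op (-1) 1
        (fun y => momentumFlux (state η₁ u₁ t y) - momentumFlux (state η₂ u₂ t y)) x := by
  have hK := greenKernel_isContDiff b 0
  have hx' := Icc_subset_uIcc hx
  have hint₁ := (h₁.memH2w ht).intervalIntegrable_deriv_deriv hμ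
  have hint₂ := (h₂.memH2w ht).intervalIntegrable_deriv_deriv hμ
  have hflux {η u : ℝ → ℝ → ℝ} (h : IsSolBS T b c μ H U η u) :
      IntervalIntegrable (fun y => momentumFlux (state η u t y)) volume (-1) 1 :=
    ((h.continuous_comp_state (contDiff_momentumFlux (n := 0)).continuous).comp
      (.prodMk_right t)).intervalIntegrable _ _
  have hsplit {η u : ℝ → ℝ → ℝ} (h : IsSolBS T b c μ H U η u)
      (hint : IntervalIntegrable (deriv (deriv (η t))) volume (-1) 1) :
      AD b (dispersiveFlux c η u t) x =
        c * (greenKernel b).op (-1) 1 (deriv (deriv (η t))) x +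
          (greenKernel b).op (-1) 1 (fun y => momentumFlux (state η u t y)) x := by
    rw [← AD_const_mul_add hx c hint (hflux h)]
    simp only [← add_assoc, momentumFlux, state]
    rfl
  rw [hsplit h₁ hint₁, hsplit h₂ hint₂, add_sub_add_comm, ← mul_sub, ← op_sub hK hx' hint₁ hint₂,
    ← op_sub hK hx' (hflux h₁) (hflux h₂), h₁.op_deriv_deriv_eta_sub h₂ hμ ht hx]

lemma isVolterraBounded_massTransferDiff (h₁ : IsSolBS T b c μ H U η₁ u₁)
    (h₂ : IsSolBS T b c μ H U η₂ u₂) :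
    IsVolterraBounded T (Icc (-1) 1) (fun t x => state η₁ u₁ t x - state η₂ u₂ t x)
      (massTransferDiff (state η₁ u₁) (state η₂ u₂)) := by
  obtain ⟨K, hK, lipschitz⟩ := exists_isMajorant_comp_sub_comp contDiff_massFlux.locallyLipschitz
    T isCompact_Icc h₁.continuous_state h₂.continuous_state
  refine ⟨K, hK, fun m hm hmaj => ?_⟩
  simp only [← intervalIntegral.integral_const_mul]
  exact (lipschitz m hmaj).integral (hm.const_mul K)

lemma isVolterraBounded_eta_sub (h₁ : IsSolBS T b c μ H U η₁ u₁)
    (h₂ : IsSolBS T b c μ H U η₂ u₂) :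
    IsVolterraBounded T (Icc (-1) 1) (fun t x => state η₁ u₁ t x - state η₂ u₂ t x)
      (fun t x => η₁ t x - η₂ t x) := by
  obtain ⟨C, hC, bound⟩ := (isSupBounded_op (greenKernel_isContDiff b 0)
    (by norm_num : (-1 : ℝ) ≤ 1)).comp_isVolterraBounded
    (h₁.isVolterraBounded_massTransferDiff h₂)
  refine ⟨C, hC, fun m hm hmaj t ht x hx => ?_⟩
  simpa only [h₁.eta_sub_eq_op h₂ ht hx] using bound m hm hmaj t ht x hx

lemma exists_isMajorant_AD_dispersiveFlux_sub (h₁ : IsSolBS T b c μ H U η₁ u₁)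
    (h₂ : IsSolBS T b c μ H U η₂ u₂) (hμ : μ < 1) :
    ∃ A B, 0 ≤ A ∧ 0 ≤ B ∧ ∀ m : ℝ → ℝ, Continuous m →
      IsMajorant T (Icc (-1) 1) (fun t x => state η₁ u₁ t x - state η₂ u₂ t x) m →
      IsMajorant T (Icc (-1) 1)
        (fun t x => AD b (dispersiveFlux c η₁ u₁ t) x - AD b (dispersiveFlux c η₂ u₂ t) x)
        fun t => A * (∫ τ in (0 : ℝ)..t, m τ) + B * m t := by
  have hK := greenKernel_isContDiff b 1
  have hle : (-1 : ℝ) ≤ 1 := by norm_num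
  obtain ⟨A, hA, dispersive⟩ := ((isSupBounded_byPartsOp hK hle).comp
    (isSupBounded_derivOp hK hle)).comp_isVolterraBounded
    (h₁.isVolterraBounded_massTransferDiff h₂)
  obtain ⟨B, hB, regular⟩ := isSupBounded_op (greenKernel_isContDiff b 0) hle
  obtain ⟨L, hL, lipschitz⟩ := exists_isMajorant_comp_sub_comp
    contDiff_momentumFlux.locallyLipschitz T isCompact_Icc h₁.continuous_state h₂.continuous_state
  refine ⟨|c| * A, B * L, by positivity, by positivity, fun m hm hmaj t ht x hx => ?_⟩
  simp only [h₁.AD_dispersiveFlux_sub_eq h₂ hμ ht hx, mul_assoc]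
  exact norm_add_le_of_le (norm_mul_le_of_le le_rfl (dispersive m hm hmaj t ht x hx))
    (regular _ _ (lipschitz m hmaj t ht) x hx)

lemma intervalIntegrable_AD_dispersiveFlux_sub (h₁ : IsSolBS T b c μ H U η₁ u₁)
    (h₂ : IsSolBS T b c μ H U η₂ u₂) (hμ : μ < 1) (ht : t ∈ Icc 0 T) (hx : x ∈ Icc (-1 : ℝ) 1) :
    IntervalIntegrable
      (fun τ => AD b (dispersiveFlux c η₁ u₁ τ) x - AD b (dispersiveFlux c η₂ u₂ τ) x)
      volume 0 t := by
  have hK := greenKernel_isContDiff b 1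
  have hflux {η u : ℝ → ℝ → ℝ} (h : IsSolBS T b c μ H U η u) :=
    h.continuous_comp_state (contDiff_momentumFlux (n := 0)).continuous
  have dispersive := continuous_byPartsOp (h := fun t => (greenKernel b).derivOp (-1) 1
    (massTransferDiff (state η₁ u₁) (state η₂ u₂) t)) hK (-1) 1 (continuous_derivOp hK (-1) 1
    (continuous_massTransferDiff h₁.continuous_state h₂.continuous_state))
  have regular := continuous_op (greenKernel_isContDiff b 0) (-1) 1
    (h := fun t y => momentumFlux (state η₁ u₁ t y) - momentumFlux (state η₂ u₂ t y))
    ((hflux h₁).sub (hflux h₂))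
  refine ((((dispersive.const_mul c).add regular).comp
    (.prodMk_left x)).intervalIntegrable 0 t).congr fun τ hτ => ?_
  rw [uIoc_of_le ht.1] at hτ
  exact (h₁.AD_dispersiveFlux_sub_eq h₂ hμ ⟨hτ.1.le, hτ.2.trans ht.2⟩ hx).symm

lemma isVolterraBounded_u_sub (h₁ : IsSolBS T b c μ H U η₁ u₁) (h₂ : IsSolBS T b c μ H U η₂ u₂)
    (hμ : μ < 1) :
    IsVolterraBounded T (Icc (-1) 1) (fun t x => state η₁ u₁ t x - state η₂ u₂ t x)
      (fun t x => u₁ t x - u₂ t x) := by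
  obtain ⟨A, B, hA, hB, bound⟩ := h₁.exists_isMajorant_AD_dispersiveFlux_sub h₂ hμ
  refine ⟨A * |T| + B, by positivity, fun m hm hmaj t ht x hx => ?_⟩
  set S := ∫ τ in (0 : ℝ)..t, m τ
  have hS : 0 ≤ S := hmaj.integral_nonneg hx le_rfl ht.1 ht.2
  have hmono {r : ℝ} (hr : r ∈ Icc 0 t) : ∫ τ in (0 : ℝ)..r, m τ ≤ S := by
    rw [← sub_nonneg, intervalIntegral.integral_interval_sub_left (hm.intervalIntegrable _ _)
      (hm.intervalIntegrable _ _)]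
    exact hmaj.integral_nonneg hx hr.1 hr.2 ht.2
  have hbound : ∀ τ ∈ Icc 0 t, ‖AD b (dispersiveFlux c η₁ u₁ τ) x -
      AD b (dispersiveFlux c η₂ u₂ τ) x‖ ≤ A * S + B * m τ := fun τ hτ =>
    (bound m hm hmaj τ ⟨hτ.1, hτ.2.trans ht.2⟩ x hx).trans
      (add_le_add (mul_le_mul_of_nonneg_left (hmono hτ) hA) le_rfl)
  calc ‖u₁ t x - u₂ t x‖ = ‖(∫ τ in (0 : ℝ)..t, AD b (dispersiveFlux c η₁ u₁ τ) x) -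
          ∫ τ in (0 : ℝ)..t, AD b (dispersiveFlux c η₂ u₂ τ) x‖ := by
        rw [(h₁.2.2.2 t ht x).2, (h₂.2.2.2 t ht x).2, add_sub_add_left_eq_sub]
        rfl
    _ ≤ ∫ τ in (0 : ℝ)..t, (A * S + B * m τ) :=
        norm_integral_sub_integral_le ht.1
          (h₁.intervalIntegrable_AD_dispersiveFlux_sub h₂ hμ ht hx)
          (Continuous.intervalIntegrable (by fun_prop) 0 t) hbound
    _ = A * t * S + B * S := by
        rw [intervalIntegral.integral_add intervalIntegrable_const
          ((hm.const_mul B).intervalIntegrable 0 t), intervalIntegral.integral_const,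
          intervalIntegral.integral_const_mul, smul_eq_mul]
        ring
    _ ≤ (A * |T| + B) * S := by
        rw [add_mul]
        gcongr
        exact ht.2.trans (le_abs_self T)

lemma isVolterraBounded_state_sub (h₁ : IsSolBS T b c μ H U η₁ u₁)
    (h₂ : IsSolBS T b c μ H U η₂ u₂) (hμ : μ < 1) :
    IsVolterraBounded T (Icc (-1) 1) (fun t x => state η₁ u₁ t x - state η₂ u₂ t x)
      (fun t x => state η₁ u₁ t x - state η₂ u₂ t x) :=
  (h₁.isVolterraBounded_eta_sub h₂).prodMk (h₁.isVolterraBounded_u_sub h₂ hμ)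

end IsSolBS

theorem uniqueness_integral_system_c_neg_general (T b c μ : ℝ) (_hb : 0 < b) (hμ : μ < 1)
    (H U : ℝ → ℝ → ℝ) (η₁ u₁ η₂ u₂ : ℝ → ℝ → ℝ)
    (h₁ : IsSolBS T b c μ H U η₁ u₁) (h₂ : IsSolBS T b c μ H U η₂ u₂) :
    ∀ t ∈ Icc (0 : ℝ) T, ∀ x ∈ Icc (-1 : ℝ) 1, η₁ t x = η₂ t x ∧ u₁ t x = u₂ t x := by
  intro t ht x hx
  have hzero := (h₁.isVolterraBounded_state_sub h₂ hμ).eq_zero isCompact_Icc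
    (h₁.continuous_state.sub h₂.continuous_state) ht hx
  exact Prod.mk.inj (sub_eq_zero.1 hzero)

/-- uniqueness for the integral formulation when `c < 0`:
two solutions in `C([0,T];H²_w) × C([0,T];H¹_w)` with the same data `H,U` coincide. -/
theorem uniqueness_integral_system_c_neg (T b c μ : ℝ) (hT : 0 < T) (hb : 0 < b)
    (hc : c < 0) (hμ₁ : -1 < μ) (hμ₂ : μ < 1) (H U : ℝ → ℝ → ℝ)
    (η₁ u₁ η₂ u₂ : ℝ → ℝ → ℝ)
    (h1 : IsSolBS T b c μ H U η₁ u₁) (h2 : IsSolBS T b c μ H U η₂ u₂) :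
    ∀ t ∈ Icc (0:ℝ) T, ∀ x ∈ Icc (-1:ℝ) 1, η₁ t x = η₂ t x ∧ u₁ t x = u₂ t x := by
  exact uniqueness_integral_system_c_neg_general T b c μ hb hμ₂ H U η₁ u₁ η₂ u₂ h1 h2
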